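/- There exist constants ε₀ ∈ (0,1) and C > 0 with the following property. Let ν ∈ (0,1], k ∈ ℤ with |k| ≥ 1, ε ∈ (0, ε₀], and λ ∈ ℝ. Let φ : [−1,1] → ℂ be four times continuously differentiable with φ(±1) = 0 and φ''(±1) = 0; set w = φ'' − k²φ (so w(±1) = 0), F(y) = −ν(w''(y) − k²w(y)) + ik(y−λ)w(y) − ε·ν^{1/3}|k|^{2/3}w(y), and ‖u‖_{L²} = (‖φ'‖_{L²}² + k²‖φ‖_{L²}²)^{1/2}. If M ≥ 0 dominates F in H^{−1}, then (ν k²)^{1/2}‖u‖_{L²} + ν‖w'‖_{L²} + ν^{2/3}|k|^{1/3}‖w‖_{L²} ≤ C·M. -/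

import Mathlib

/-- The `L²` norm of a function on the interval `[-1,1]`. -/
noncomputable def nL2 (f : ℝ → ℂ) : ℝ :=
  (∫ y in Set.Icc (-1:ℝ) 1, ‖f y‖ ^ 2) ^ ((1:ℝ)/2)

/-- The `L²` pairing of two functions on the interval `[-1,1]`. -/
noncomputable def innI (f g : ℝ → ℂ) : ℂ :=
  ∫ y in Set.Icc (-1:ℝ) 1, f y * (starRingEnd ℂ) (g y)

/-- `M ≥ 0` dominates `F` in `H^{-1}` : `|⟨F, φ⟩| ≤ M ‖φ‖_{H¹}` for every `C¹` function
vanishing at `±1`. -/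
def Dominates (F : ℝ → ℂ) (M : ℝ) : Prop :=
  ∀ g : ℝ → ℂ, ContDiff ℝ 1 g → g (-1) = 0 → g 1 = 0 →
    ‖innI F g‖ ≤ M * ((nL2 g ^ 2 + nL2 (deriv g) ^ 2) ^ ((1:ℝ)/2))

/-!
Testing the equation against `w` controls `‖w'‖` and `k² ‖w‖²`, but the transport term
`i k (y - λ) w` is invisible to this real energy identity. To exploit it, set
`δ = (ν / |k|)^{1/3}` and `t = (y - λ) / δ`, and test against `t (1 + t²)⁻¹ f`, a bounded
regularization of `f / t`. The transport term then becomes `i k δ ⟨w, f⟩` minus a contribution of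
the critical layer `|y - λ| ≲ δ`, which is measured by the weighted norm `Y² = ∫ |f|² / (1 + t²)`.
Since the weight is the derivative of the bounded function `δ arctan t`, an integration by parts
gives `Y² ≤ π δ ‖f‖ ‖f'‖`, so the layer contribution can be absorbed.
Taking `f = w` yields the bound on the vorticity. Taking `f = φ` yields the bound on the velocity,
because `⟨w, φ⟩ = -‖u‖²`; when `|k| δ ≥ 1` the latter already follows from `|k| ‖u‖ ≤ ‖w‖`.
-/

open MeasureTheory Set

/-! ### The `L²` norm and pairing -/

/-- Square integrability on `[-1,1]`, the condition under which `nL2` and `innI` are meaningful. -/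
abbrev MemL2 (f : ℝ → ℂ) : Prop := MemLp f 2 (volume.restrict (Icc (-1 : ℝ) 1))

lemma memL2_of_continuous {f : ℝ → ℂ} (hf : Continuous f) : MemL2 f :=
  (memLp_two_iff_integrable_sq_norm hf.aestronglyMeasurable).2
    (hf.norm.pow 2).continuousOn.integrableOn_Icc

lemma nL2_nonneg (f : ℝ → ℂ) : 0 ≤ nL2 f :=
  Real.rpow_nonneg (integral_nonneg fun _ => sq_nonneg _) _

lemma nL2_sq (f : ℝ → ℂ) : nL2 f ^ 2 = ∫ y in Icc (-1 : ℝ) 1, ‖f y‖ ^ 2 := by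
  rw [nL2, ← Real.sqrt_eq_rpow, Real.sq_sqrt (integral_nonneg fun _ => sq_nonneg _)]

lemma nL2_eq_lpNorm {f : ℝ → ℂ}
    (hf : AEStronglyMeasurable f (volume.restrict (Icc (-1 : ℝ) 1))) :
    nL2 f = lpNorm f 2 (volume.restrict (Icc (-1 : ℝ) 1)) := by
  rw [lpNorm_eq_integral_norm_rpow_toReal two_ne_zero ENNReal.ofNat_ne_top hf, nL2]
  norm_num

lemma nL2_add_le {f g : ℝ → ℂ} (hf : MemL2 f) (hg : MemL2 g) :
    nL2 (fun y => f y + g y) ≤ nL2 f + nL2 g := by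
  change nL2 (f + g) ≤ _
  rw [nL2_eq_lpNorm (hf.add hg).aestronglyMeasurable, nL2_eq_lpNorm hf.aestronglyMeasurable,
    nL2_eq_lpNorm hg.aestronglyMeasurable]
  exact lpNorm_add_le hf one_le_two

lemma nL2_le_mul_nL2 {f g : ℝ → ℂ} {c : ℝ} (hg : MemL2 g) (hc : 0 ≤ c)
    (h : ∀ y, ‖f y‖ ≤ c * ‖g y‖) : nL2 f ≤ c * nL2 g := by
  refine le_of_pow_le_pow_left₀ two_ne_zero (mul_nonneg hc (nL2_nonneg g)) ?_
  rw [mul_pow, nL2_sq, nL2_sq, ← integral_const_mul]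
  refine integral_mono_of_nonneg (ae_of_all _ fun _ => sq_nonneg _)
    (hg.norm.integrable_sq.const_mul _) (ae_of_all _ fun y => ?_)
  simpa only [mul_pow] using pow_le_pow_left₀ (norm_nonneg _) (h y) 2

lemma nL2_ofReal_mul_le {f : ℝ → ℂ} {m : ℝ → ℝ} {c : ℝ} (hf : MemL2 f)
    (hm : ∀ y, |m y| ≤ c) : nL2 (fun y => (m y : ℂ) * f y) ≤ c * nL2 f := by
  refine nL2_le_mul_nL2 hf ((abs_nonneg _).trans (hm 0)) fun y => ?_
  rw [norm_mul, Complex.norm_real, Real.norm_eq_abs]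
  exact mul_le_mul_of_nonneg_right (hm y) (norm_nonneg _)

lemma integrable_mul_conj {f g : ℝ → ℂ} (hf : MemL2 f) (hg : MemL2 g) :
    IntegrableOn (fun y => f y * (starRingEnd ℂ) (g y)) (Icc (-1 : ℝ) 1) :=
  hf.integrable_mul hg.star

lemma norm_innI_le {f g : ℝ → ℂ} (hf : MemL2 f) (hg : MemL2 g) :
    ‖innI f g‖ ≤ nL2 f * nL2 g := by
  have hölder := integral_mul_norm_le_Lp_mul_Lq Real.HolderConjugate.two_two
    (by simpa using hf) (by simpa using hg)
  simp only [Real.rpow_two] at hölder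
  calc ‖innI f g‖ ≤ ∫ y in Icc (-1 : ℝ) 1, ‖f y * (starRingEnd ℂ) (g y)‖ :=
        norm_integral_le_integral_norm _
    _ = ∫ y in Icc (-1 : ℝ) 1, ‖f y‖ * ‖g y‖ := by simp only [norm_mul, RCLike.norm_conj]
    _ ≤ nL2 f * nL2 g := hölder

lemma innI_ofReal_mul_self (m : ℝ → ℝ) (f : ℝ → ℂ) :
    innI (fun y => (m y : ℂ) * f y) f
      = ((∫ y in Icc (-1 : ℝ) 1, m y * ‖f y‖ ^ 2 : ℝ) : ℂ) := by
  rw [innI, ← integral_complex_ofReal]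
  congr with y
  rw [mul_assoc, Complex.mul_conj, Complex.normSq_eq_norm_sq, Complex.ofReal_mul]

lemma innI_self (f : ℝ → ℂ) : innI f f = ((nL2 f ^ 2 : ℝ) : ℂ) := by
  simpa [nL2_sq] using innI_ofReal_mul_self 1 f

lemma innI_add_left {f g h : ℝ → ℂ} (hf : MemL2 f) (hg : MemL2 g) (hh : MemL2 h) :
    innI (fun y => f y + g y) h = innI f h + innI g h := by
  simp only [innI, add_mul]
  exact integral_add (integrable_mul_conj hf hh) (integrable_mul_conj hg hh)

lemma innI_const_mul_left (c : ℂ) (f g : ℝ → ℂ) :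
    innI (fun y => c * f y) g = c * innI f g := by
  simp only [innI, mul_assoc]
  exact integral_const_mul c _

/-! ### Test functions -/

/-- The test functions of `H^{-1}`: `C¹` functions vanishing at `±1`. -/
structure IsTestFunction (g : ℝ → ℂ) : Prop where
  contDiff : ContDiff ℝ 1 g
  left_eq_zero : g (-1) = 0
  right_eq_zero : g 1 = 0

namespace IsTestFunction

variable {g : ℝ → ℂ}

lemma memL2 (hg : IsTestFunction g) : MemL2 g := memL2_of_continuous hg.contDiff.continuous

lemma memL2_deriv (hg : IsTestFunction g) : MemL2 (deriv g) :=
  memL2_of_continuous hg.contDiff.continuous_deriv_one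

lemma ofReal_mul (hg : IsTestFunction g) {m : ℝ → ℝ} (hm : ContDiff ℝ 1 m) :
    IsTestFunction fun y => (m y : ℂ) * g y where
  contDiff := (Complex.ofRealCLM.contDiff.comp hm).mul hg.contDiff
  left_eq_zero := by rw [hg.left_eq_zero, mul_zero]
  right_eq_zero := by rw [hg.right_eq_zero, mul_zero]

end IsTestFunction

lemma deriv_ofReal_mul {m : ℝ → ℝ} {g : ℝ → ℂ} (hm : Differentiable ℝ m)
    (hg : Differentiable ℝ g) :
    deriv (fun y => (m y : ℂ) * g y)
      = fun y => ((deriv m y : ℝ) : ℂ) * g y + (m y : ℂ) * deriv g y := by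
  ext y
  exact ((hm y).hasDerivAt.ofReal_comp.mul (hg y).hasDerivAt).deriv

lemma Dominates.norm_innI_le {F g : ℝ → ℂ} {M : ℝ} (hF : Dominates F M) (hM : 0 ≤ M)
    (hg : IsTestFunction g) : ‖innI F g‖ ≤ M * (nL2 g + nL2 (deriv g)) := by
  refine (hF g hg.contDiff hg.left_eq_zero hg.right_eq_zero).trans
    (mul_le_mul_of_nonneg_left ?_ hM)
  have hg₀ := nL2_nonneg g
  have hg₁ := nL2_nonneg (deriv g)
  rw [← Real.sqrt_eq_rpow, Real.sqrt_le_left (by positivity)]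
  nlinarith only [mul_nonneg hg₀ hg₁]

lemma innI_deriv_left {f g : ℝ → ℂ} (hf : ContDiff ℝ 1 f) (hg : IsTestFunction g) :
    innI (deriv f) g = -innI f (deriv g) := by
  have hf' (y : ℝ) : HasDerivAt f (deriv f y) y := (hf.differentiable one_ne_zero y).hasDerivAt
  have hg' (y : ℝ) : HasDerivAt (fun y => (starRingEnd ℂ) (g y)) ((starRingEnd ℂ) (deriv g y)) y :=
    (hg.contDiff.differentiable one_ne_zero y).hasDerivAt.star
  have hdf := hf.continuous_deriv_one
  have hdg := hg.contDiff.continuous_deriv_one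
  have parts := intervalIntegral.integral_mul_deriv_eq_deriv_mul (a := -1) (b := 1)
    (fun y _ => hf' y) (fun y _ => hg' y) (hdf.intervalIntegrable _ _)
    (Continuous.intervalIntegrable (by fun_prop) _ _)
  rw [hg.left_eq_zero, hg.right_eq_zero, map_zero, mul_zero, mul_zero, sub_zero, zero_sub,
    eq_neg_iff_add_eq_zero, add_comm, ← eq_neg_iff_add_eq_zero] at parts
  simpa only [innI, integral_Icc_eq_integral_Ioc,
    intervalIntegral.integral_of_le (show (-1 : ℝ) ≤ 1 by norm_num)] using parts

lemma norm_innI_deriv_mul_self_le {m : ℝ → ℝ} {f : ℝ → ℂ} {c : ℝ} (hm : ContDiff ℝ 1 m)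
    (hmc : ∀ y, |m y| ≤ c) (hf : IsTestFunction f) :
    ‖innI (fun y => ((deriv m y : ℝ) : ℂ) * f y) f‖ ≤ 2 * c * (nL2 f * nL2 (deriv f)) := by
  have hmf := hf.ofReal_mul hm
  have hdmf : MemL2 fun y => ((deriv m y : ℝ) : ℂ) * f y := memL2_of_continuous
    ((Complex.continuous_ofReal.comp hm.continuous_deriv_one).mul hf.contDiff.continuous)
  have hmdf : MemL2 fun y => (m y : ℂ) * deriv f y := memL2_of_continuous
    ((Complex.continuous_ofReal.comp hm.continuous).mul hf.contDiff.continuous_deriv_one)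
  have parts := innI_deriv_left hmf.contDiff hf
  rw [deriv_ofReal_mul (hm.differentiable one_ne_zero) (hf.contDiff.differentiable one_ne_zero),
    innI_add_left hdmf hmdf hf.memL2] at parts
  calc ‖innI (fun y => ((deriv m y : ℝ) : ℂ) * f y) f‖
      = ‖innI (fun y => (m y : ℂ) * f y) (deriv f) + innI (fun y => (m y : ℂ) * deriv f y) f‖ := by
        rw [eq_sub_of_add_eq parts, ← norm_neg]
        congr 1
        ring
    _ ≤ nL2 (fun y => (m y : ℂ) * f y) * nL2 (deriv f)
        + nL2 (fun y => (m y : ℂ) * deriv f y) * nL2 f :=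
        norm_add_le_of_le (norm_innI_le hmf.memL2 hf.memL2_deriv) (norm_innI_le hmdf hf.memL2)
    _ ≤ c * nL2 f * nL2 (deriv f) + c * nL2 (deriv f) * nL2 f :=
        add_le_add
          (mul_le_mul_of_nonneg_right (nL2_ofReal_mul_le hf.memL2 hmc) (nL2_nonneg _))
          (mul_le_mul_of_nonneg_right (nL2_ofReal_mul_le hf.memL2_deriv hmc) (nL2_nonneg _))
    _ = 2 * c * (nL2 f * nL2 (deriv f)) := by ring

/-! ### The critical layer -/

/-- The bump `(1 + t²)⁻¹`, `t = (y - λ) / δ`, localizing to the critical layer of width `δ`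
around `λ`. -/
noncomputable def lorentzian (δ lam y : ℝ) : ℝ := 1 / (1 + ((y - lam) / δ) ^ 2)

/-- The multiplier `t (1 + t²)⁻¹`, `t = (y - λ) / δ`: a bounded substitute for the singular
multiplier `δ / (y - λ)`, which it equals up to a relative error `lorentzian δ lam`. -/
noncomputable def criticalMultiplier (δ lam y : ℝ) : ℝ := (y - lam) / δ * lorentzian δ lam y

/-- The `L²` norm of `f` localized to the critical layer, that is, with weight
`lorentzian δ lam`. -/
noncomputable def criticalNorm (δ lam : ℝ) (f : ℝ → ℂ) : ℝ :=
  nL2 fun y => (√(lorentzian δ lam y) : ℂ) * f y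

section CriticalLayer

variable (δ lam : ℝ)

lemma hasDerivAt_sub_div_const (y : ℝ) : HasDerivAt (fun y : ℝ => (y - lam) / δ) (1 / δ) y :=
  ((hasDerivAt_id y).sub_const lam).div_const δ

lemma lorentzian_pos (y : ℝ) : 0 < lorentzian δ lam y := by
  unfold lorentzian
  positivity

lemma lorentzian_le_one (y : ℝ) : lorentzian δ lam y ≤ 1 :=
  div_le_one_of_le₀ (le_add_of_nonneg_right (sq_nonneg _)) (by positivity)

lemma lorentzian_le_sqrt (y : ℝ) : lorentzian δ lam y ≤ √(lorentzian δ lam y) :=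
  Real.le_sqrt_of_sq_le
    (pow_le_of_le_one (lorentzian_pos δ lam y).le (lorentzian_le_one δ lam y) two_ne_zero)

lemma contDiff_lorentzian : ContDiff ℝ 1 (lorentzian δ lam) :=
  contDiff_const.div (by fun_prop) fun _ => by positivity

lemma contDiff_criticalMultiplier : ContDiff ℝ 1 (criticalMultiplier δ lam) :=
  ContDiff.mul (by fun_prop) (contDiff_lorentzian δ lam)

lemma abs_criticalMultiplier_le (y : ℝ) :
    |criticalMultiplier δ lam y| ≤ √(lorentzian δ lam y) := by
  refine Real.abs_le_sqrt ?_
  unfold criticalMultiplier lorentzian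
  rw [mul_one_div, div_pow, div_le_div_iff₀ (by positivity) (by positivity)]
  nlinarith only [sq_nonneg ((y - lam) / δ)]

lemma abs_criticalMultiplier_le_one (y : ℝ) : |criticalMultiplier δ lam y| ≤ 1 :=
  (abs_criticalMultiplier_le δ lam y).trans (Real.sqrt_le_one.2 (lorentzian_le_one δ lam y))

lemma hasDerivAt_criticalMultiplier (y : ℝ) :
    HasDerivAt (criticalMultiplier δ lam)
      ((2 * lorentzian δ lam y ^ 2 - lorentzian δ lam y) / δ) y := by
  have hasDerivAt_scaled := hasDerivAt_sub_div_const δ lam y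
  have hasDerivAt_denom : HasDerivAt (fun y : ℝ => 1 + ((y - lam) / δ) ^ 2)
      ((2 : ℕ) * ((y - lam) / δ) ^ 1 * (1 / δ)) y := (hasDerivAt_scaled.pow 2).const_add 1
  have hasDerivAt_lorentzian : HasDerivAt (lorentzian δ lam) _ y :=
    (hasDerivAt_const y (1 : ℝ)).div hasDerivAt_denom (by positivity)
  refine (hasDerivAt_scaled.mul hasDerivAt_lorentzian).congr_deriv ?_
  unfold lorentzian
  field_simp
  push_cast
  ring

lemma nL2_ofReal_mul_le_criticalNorm {m : ℝ → ℝ} {f : ℝ → ℂ} {c : ℝ} (hf : Continuous f)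
    (hc : 0 ≤ c) (hm : ∀ y, |m y| ≤ c * √(lorentzian δ lam y)) :
    nL2 (fun y => (m y : ℂ) * f y) ≤ c * criticalNorm δ lam f := by
  have hχ := (contDiff_lorentzian δ lam).continuous
  refine nL2_le_mul_nL2 (memL2_of_continuous (by fun_prop)) hc fun y => ?_
  rw [norm_mul, norm_mul, Complex.norm_real, Complex.norm_real, ← mul_assoc,
    Real.norm_of_nonneg (Real.sqrt_nonneg _), Real.norm_eq_abs]
  exact mul_le_mul_of_nonneg_right (hm y) (norm_nonneg _)

lemma criticalNorm_nonneg (f : ℝ → ℂ) : 0 ≤ criticalNorm δ lam f := nL2_nonneg _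

lemma innI_lorentzian_mul_self (f : ℝ → ℂ) :
    innI (fun y => (lorentzian δ lam y : ℂ) * f y) f = ((criticalNorm δ lam f ^ 2 : ℝ) : ℂ) := by
  rw [criticalNorm, nL2_sq, innI_ofReal_mul_self]
  congr with y
  rw [norm_mul, Complex.norm_real, mul_pow, Real.norm_eq_abs, sq_abs,
    Real.sq_sqrt (lorentzian_pos δ lam y).le]

variable {δ} {f : ℝ → ℂ}

lemma criticalNorm_sq_le (hδ : 0 < δ) (hf : IsTestFunction f) :
    criticalNorm δ lam f ^ 2 ≤ Real.pi * δ * (nL2 f * nL2 (deriv f)) := by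
  set m : ℝ → ℝ := fun y => δ * Real.arctan ((y - lam) / δ) with hm
  have hm_deriv : deriv m = lorentzian δ lam := by
    ext y
    rw [((hasDerivAt_sub_div_const δ lam y).arctan.const_mul δ).deriv, lorentzian]
    field_simp
  have hm_contDiff : ContDiff ℝ 1 m :=
    contDiff_const.mul (Real.contDiff_arctan.comp (by fun_prop))
  have hm_le (y : ℝ) : |m y| ≤ δ * (Real.pi / 2) := by
    rw [hm, abs_mul, abs_of_pos hδ]
    exact mul_le_mul_of_nonneg_left (abs_le.2 ⟨(Real.neg_pi_div_two_lt_arctan _).le,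
      (Real.arctan_lt_pi_div_two _).le⟩) hδ.le
  have key := norm_innI_deriv_mul_self_le hm_contDiff hm_le hf
  rw [hm_deriv, innI_lorentzian_mul_self, Complex.norm_real, Real.norm_of_nonneg (sq_nonneg _)]
    at key
  linarith only [key]

lemma nL2_criticalMultiplier_mul_le (hf : Continuous f) :
    nL2 (fun y => (criticalMultiplier δ lam y : ℂ) * f y) ≤ criticalNorm δ lam f := by
  simpa only [one_mul] using nL2_ofReal_mul_le_criticalNorm δ lam hf zero_le_one
    fun y => by simpa only [one_mul] using abs_criticalMultiplier_le δ lam y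

lemma nL2_lorentzian_mul_le (hf : Continuous f) :
    nL2 (fun y => (lorentzian δ lam y : ℂ) * f y) ≤ criticalNorm δ lam f := by
  simpa only [one_mul] using nL2_ofReal_mul_le_criticalNorm δ lam hf zero_le_one
    fun y => by
      simpa only [one_mul, abs_of_pos (lorentzian_pos δ lam y)] using lorentzian_le_sqrt δ lam y

lemma abs_deriv_criticalMultiplier_le (hδ : 0 < δ) (y : ℝ) :
    |deriv (criticalMultiplier δ lam) y| ≤ δ⁻¹ * √(lorentzian δ lam y) := by
  have hχ₀ := lorentzian_pos δ lam y
  have hχ₁ := lorentzian_le_one δ lam y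
  rw [(hasDerivAt_criticalMultiplier δ lam y).deriv, abs_div, abs_of_pos hδ, div_eq_inv_mul]
  refine mul_le_mul_of_nonneg_left (le_trans ?_ (lorentzian_le_sqrt δ lam y)) (inv_pos.2 hδ).le
  rw [abs_le]
  constructor <;> nlinarith only [hχ₀, hχ₁]

lemma mul_nL2_deriv_criticalMultiplier_mul_le (hδ : 0 < δ) (hf : ContDiff ℝ 1 f) :
    δ * nL2 (deriv fun y => (criticalMultiplier δ lam y : ℂ) * f y)
      ≤ criticalNorm δ lam f + δ * nL2 (deriv f) := by
  have hρ := contDiff_criticalMultiplier δ lam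
  have hf₀ := hf.continuous
  have hmain : nL2 (deriv fun y => (criticalMultiplier δ lam y : ℂ) * f y)
      ≤ δ⁻¹ * criticalNorm δ lam f + 1 * nL2 (deriv f) := by
    rw [deriv_ofReal_mul (hρ.differentiable one_ne_zero) (hf.differentiable one_ne_zero)]
    refine (nL2_add_le
      (memL2_of_continuous ((Complex.continuous_ofReal.comp hρ.continuous_deriv_one).mul hf₀))
      (memL2_of_continuous ((Complex.continuous_ofReal.comp hρ.continuous).mul
        hf.continuous_deriv_one))).trans (add_le_add ?_ ?_)
    · exact nL2_ofReal_mul_le_criticalNorm δ lam hf₀ (inv_pos.2 hδ).le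
        (abs_deriv_criticalMultiplier_le lam hδ)
    · exact nL2_ofReal_mul_le (memL2_of_continuous hf.continuous_deriv_one)
        (abs_criticalMultiplier_le_one δ lam)
  calc δ * nL2 (deriv fun y => (criticalMultiplier δ lam y : ℂ) * f y)
      ≤ δ * (δ⁻¹ * criticalNorm δ lam f + 1 * nL2 (deriv f)) :=
        mul_le_mul_of_nonneg_left hmain hδ.le
    _ = criticalNorm δ lam f + δ * nL2 (deriv f) := by field_simp

lemma innI_sub_mul_criticalMultiplier_mul {w : ℝ → ℂ} (hδ : δ ≠ 0) (hw : MemL2 w)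
    (hf : Continuous f) :
    innI (fun y => ((y : ℂ) - lam) * w y) (fun y => (criticalMultiplier δ lam y : ℂ) * f y)
      = δ * (innI w f - innI w fun y => (lorentzian δ lam y : ℂ) * f y) := by
  have hχf : MemL2 fun y => (lorentzian δ lam y : ℂ) * f y := memL2_of_continuous
    ((Complex.continuous_ofReal.comp (contDiff_lorentzian δ lam).continuous).mul hf)
  have mul_criticalMultiplier (y : ℝ) :
      (y - lam) * criticalMultiplier δ lam y = δ * (1 - lorentzian δ lam y) := by
    unfold criticalMultiplier lorentzian
    field_simp
    ring
  simp only [innI]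
  rw [← integral_sub (integrable_mul_conj hw (memL2_of_continuous hf)) (integrable_mul_conj hw hχf),
    ← integral_const_mul]
  congr with y
  have hy := congrArg (fun x : ℝ => (x : ℂ)) (mul_criticalMultiplier y)
  simp only [Complex.ofReal_mul, Complex.ofReal_sub, Complex.ofReal_one] at hy
  simp only [map_mul, Complex.conj_ofReal]
  linear_combination (w y * (starRingEnd ℂ) (f y)) * hy

end CriticalLayer

/-! ### The Orr–Sommerfeld operator -/

/-- The Orr–Sommerfeld operator with viscosity `ν`, wave number `k` and spectral parameter `λ`,
shifted by `-s`, acting on the vorticity `w`. -/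
noncomputable def orrSommerfeld (ν k lam s : ℝ) (w : ℝ → ℂ) : ℝ → ℂ := fun y =>
  -(ν : ℂ) * (deriv (deriv w) y - (k : ℂ) ^ 2 * w y)
    + Complex.I * (k : ℂ) * ((y : ℂ) - (lam : ℂ)) * w y - (s : ℂ) * w y

section OrrSommerfeld

variable {ν k lam s M : ℝ} {w : ℝ → ℂ}

lemma innI_orrSommerfeld (hw : ContDiff ℝ 2 w) {g : ℝ → ℂ} (hg : IsTestFunction g) :
    innI (orrSommerfeld ν k lam s w) g
      = ν * innI (deriv w) (deriv g) + ν * k ^ 2 * innI w g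
        + Complex.I * k * innI (fun y => ((y : ℂ) - lam) * w y) g - s * innI w g := by
  have hdw : ContDiff ℝ 1 (deriv w) := hw.deriv' (n := 1)
  have hw₀ := hw.continuous
  have hviscous : MemL2 fun y => -(ν : ℂ) * deriv (deriv w) y :=
    memL2_of_continuous (continuous_const.mul hdw.continuous_deriv_one)
  have hdiffusion : MemL2 fun y => -(ν : ℂ) * deriv (deriv w) y + (ν * k ^ 2 : ℂ) * w y :=
    hviscous.add (memL2_of_continuous (by fun_prop))
  have hadvection : MemL2 fun y => -(ν : ℂ) * deriv (deriv w) y + (ν * k ^ 2 : ℂ) * w y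
      + (Complex.I * k) * (((y : ℂ) - lam) * w y) :=
    hdiffusion.add (memL2_of_continuous (by fun_prop))
  have expand : orrSommerfeld ν k lam s w = fun y =>
      -(ν : ℂ) * deriv (deriv w) y + (ν * k ^ 2 : ℂ) * w y
        + (Complex.I * k) * (((y : ℂ) - lam) * w y) + -(s : ℂ) * w y := by
    ext y
    rw [orrSommerfeld]
    ring
  rw [expand, innI_add_left hadvection (memL2_of_continuous (by fun_prop)) hg.memL2,
    innI_add_left hdiffusion (memL2_of_continuous (by fun_prop)) hg.memL2,
    innI_add_left hviscous (memL2_of_continuous (by fun_prop)) hg.memL2]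
  simp only [innI_const_mul_left, innI_deriv_left hdw hg]
  ring

lemma re_innI_orrSommerfeld_self (hw : ContDiff ℝ 2 w) (hw₀ : IsTestFunction w) :
    (innI (orrSommerfeld ν k lam s w) w).re
      = ν * nL2 (deriv w) ^ 2 + ν * k ^ 2 * nL2 w ^ 2 - s * nL2 w ^ 2 := by
  have transport_real := innI_ofReal_mul_self (fun y => y - lam) w
  simp only [Complex.ofReal_sub] at transport_real
  rw [innI_orrSommerfeld hw hw₀, transport_real, innI_self, innI_self]
  simp [← Complex.ofReal_pow]

lemma energy_estimate (hw : ContDiff ℝ 2 w) (hw₀ : IsTestFunction w) (hM : 0 ≤ M)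
    (hF : Dominates (orrSommerfeld ν k lam s w) M) :
    ν * nL2 (deriv w) ^ 2 + ν * k ^ 2 * nL2 w ^ 2
      ≤ M * (nL2 w + nL2 (deriv w)) + s * nL2 w ^ 2 := by
  have hre := (Complex.re_le_norm _).trans (hF.norm_innI_le hM hw₀)
  rw [re_innI_orrSommerfeld_self hw hw₀] at hre
  linarith only [hre]

section CriticalTest

variable {δ : ℝ} {f : ℝ → ℂ}

-- Tested against `criticalMultiplier δ lam * f`, the transport term becomes `δ * ⟨w, f⟩` up to an
-- error supported in the critical layer.
lemma I_mul_innI_eq (hδ : δ ≠ 0) (hw : ContDiff ℝ 2 w) (hf : IsTestFunction f)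
    {g : ℝ → ℂ} (hg : g = fun y => (criticalMultiplier δ lam y : ℂ) * f y) :
    Complex.I * k * δ * innI w f
      = innI (orrSommerfeld ν k lam s w) g + -(ν * innI (deriv w) (deriv g))
        + -(ν * k ^ 2 * innI w g)
        + (Complex.I * k * δ * innI w (fun y => (lorentzian δ lam y : ℂ) * f y)
          + s * innI w g) := by
  subst hg
  rw [innI_orrSommerfeld hw (hf.ofReal_mul (contDiff_criticalMultiplier δ lam)),
    innI_sub_mul_criticalMultiplier_mul lam hδ (memL2_of_continuous hw.continuous)
      hf.contDiff.continuous]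
  ring

lemma abs_mul_norm_innI_le (hν : 0 ≤ ν) (hδ : 0 < δ) (hw : ContDiff ℝ 2 w)
    (hf : IsTestFunction f) (hM : 0 ≤ M) (hF : Dominates (orrSommerfeld ν k lam s w) M)
    {g : ℝ → ℂ} (hg : g = fun y => (criticalMultiplier δ lam y : ℂ) * f y) :
    |k| * δ * ‖innI w f‖
      ≤ M * (nL2 g + nL2 (deriv g)) + ν * (nL2 (deriv w) * nL2 (deriv g))
        + ν * k ^ 2 * (nL2 w * nL2 g)
        + (|k| * δ * (nL2 w * criticalNorm δ lam f) + |s| * (nL2 w * nL2 g)) := by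
  have hwL2 : MemL2 w := memL2_of_continuous hw.continuous
  have hdwL2 : MemL2 (deriv w) := memL2_of_continuous (hw.continuous_deriv one_le_two)
  have hg' : IsTestFunction g := hg ▸ hf.ofReal_mul (contDiff_criticalMultiplier δ lam)
  have layer_error : ‖innI w fun y => (lorentzian δ lam y : ℂ) * f y‖
      ≤ nL2 w * criticalNorm δ lam f :=
    (norm_innI_le hwL2 (hf.ofReal_mul (contDiff_lorentzian δ lam)).memL2).trans
      (mul_le_mul_of_nonneg_left (nL2_lorentzian_mul_le lam hf.contDiff.continuous) (nL2_nonneg w))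
  have hnorm := congrArg norm (I_mul_innI_eq (ν := ν) (k := k) (s := s) hδ.ne' hw hf hg)
  simp only [norm_mul, Complex.norm_I, Complex.norm_real, Real.norm_eq_abs, abs_of_pos hδ,
    one_mul] at hnorm
  rw [hnorm]
  refine norm_add_le_of_le (norm_add₃_le.trans (add_le_add_three
    (hF.norm_innI_le hM hg') ?_ ?_)) (norm_add_le_of_le ?_ ?_) <;>
  simp only [norm_neg, norm_mul, norm_pow, Complex.norm_I, Complex.norm_real,
    Real.norm_eq_abs, abs_of_pos hδ, abs_of_nonneg hν, sq_abs, one_mul] <;>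
  gcongr
  exacts [norm_innI_le hdwL2 hg'.memL2_deriv, norm_innI_le hwL2 hg'.memL2,
    norm_innI_le hwL2 hg'.memL2]

lemma critical_layer_estimate (hν : 0 ≤ ν) (hδ : 0 < δ) (hδ₁ : δ ≤ 1)
    (hw : ContDiff ℝ 2 w) (hf : IsTestFunction f) (hM : 0 ≤ M)
    (hF : Dominates (orrSommerfeld ν k lam s w) M) :
    |k| * δ ^ 2 * ‖innI w f‖
      ≤ M * (2 * criticalNorm δ lam f + δ * nL2 (deriv f))
        + ν * nL2 (deriv w) * (criticalNorm δ lam f + δ * nL2 (deriv f))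
        + δ * (ν * k ^ 2 * (nL2 w * nL2 f))
        + δ * ((|s| + |k| * δ) * (nL2 w * criticalNorm δ lam f)) := by
  obtain ⟨g, hg⟩ : ∃ g : ℝ → ℂ, g = fun y => (criticalMultiplier δ lam y : ℂ) * f y := ⟨_, rfl⟩
  have hw₀ := nL2_nonneg w
  have hw₁ := nL2_nonneg (deriv w)
  have hg₀ := nL2_nonneg g
  have hg_crit : nL2 g ≤ criticalNorm δ lam f :=
    hg ▸ nL2_criticalMultiplier_mul_le lam hf.contDiff.continuous
  have hg_le : nL2 g ≤ nL2 f := by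
    simpa only [hg, one_mul] using
      nL2_ofReal_mul_le hf.memL2 (abs_criticalMultiplier_le_one δ lam)
  have hdg : δ * nL2 (deriv g) ≤ criticalNorm δ lam f + δ * nL2 (deriv f) :=
    hg ▸ mul_nL2_deriv_criticalMultiplier_mul_le lam hδ hf.contDiff
  calc |k| * δ ^ 2 * ‖innI w f‖ = δ * (|k| * δ * ‖innI w f‖) := by ring
    _ ≤ δ * _ := mul_le_mul_of_nonneg_left (abs_mul_norm_innI_le hν hδ hw hf hM hF hg) hδ.le
    _ = M * (δ * nL2 g + δ * nL2 (deriv g)) + ν * nL2 (deriv w) * (δ * nL2 (deriv g))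
          + δ * (ν * k ^ 2 * (nL2 w * nL2 g))
          + δ * (|k| * δ * (nL2 w * criticalNorm δ lam f) + |s| * (nL2 w * nL2 g)) := by ring
    _ ≤ M * (1 * criticalNorm δ lam f + (criticalNorm δ lam f + δ * nL2 (deriv f)))
          + ν * nL2 (deriv w) * (criticalNorm δ lam f + δ * nL2 (deriv f))
          + δ * (ν * k ^ 2 * (nL2 w * nL2 f))
          + δ * (|k| * δ * (nL2 w * criticalNorm δ lam f)
            + |s| * (nL2 w * criticalNorm δ lam f)) := by gcongr
    _ = _ := by ring

end CriticalTest

end OrrSommerfeld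

/-! ### The vorticity estimate -/

lemma bounds_of_quadratic_estimates {A B D Z M : ℝ} (hA : 0 ≤ A) (hB : 0 ≤ B) (hM : 0 ≤ M)
    (interpolation : Z ^ 2 ≤ 4 * (A * B))
    (layer : A ^ 2 ≤ M * (2 * Z + B) + B * (Z + B) + D ^ 2 + 2 * (A * Z))
    (energy : B ^ 2 + D ^ 2 ≤ M * (A + B) + A ^ 2 / 10000) :
    A ≤ 2000 * M ∧ B ≤ 100 * M ∧ D ≤ 100 * M := by
  have young : Z ≤ A / 8 + 8 * B := by
    refine le_of_sq_le_sq (interpolation.trans ?_) (by positivity)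
    linarith only [sq_nonneg (A / 8 - 8 * B)]
  have energy_absorbed : B ^ 2 + D ^ 2 ≤ 2 * (M * A) + M ^ 2 + A ^ 2 / 5000 := by
    linarith only [energy, sq_nonneg (M - B), sq_nonneg D]
  have layer_absorbed : 3 / 8 * A ^ 2 ≤ 74 * M ^ 2 + 271 * (B ^ 2 + D ^ 2) := by
    linarith only [layer, mul_le_mul_of_nonneg_left young hM, mul_le_mul_of_nonneg_left young hB,
      mul_le_mul_of_nonneg_left young hA, sq_nonneg (A / 2 - 129 / 8 * B), sq_nonneg (A - M),
      sq_nonneg (17 / 2 * M - B), sq_nonneg D, sq_nonneg B, sq_nonneg M]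
  have hAM : A ≤ 2000 * M := by
    refine le_of_sq_le_sq ?_ (by positivity)
    linarith only [energy_absorbed, layer_absorbed, sq_nonneg (2 / 5 * A - 1355 / 2 * M),
      sq_nonneg M]
  have hMA := mul_le_mul_of_nonneg_left hAM hM
  have hA_sq := pow_le_pow_left₀ hA hAM 2
  have hBD : B ^ 2 + D ^ 2 ≤ (100 * M) ^ 2 := by
    linarith only [energy_absorbed, hMA, hA_sq, sq_nonneg M]
  exact ⟨hAM, le_of_sq_le_sq (by linarith only [hBD, sq_nonneg D]) (by positivity),
    le_of_sq_le_sq (by linarith only [hBD, sq_nonneg B]) (by positivity)⟩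

lemma vorticity_estimate {ν k lam s M δ : ℝ} {w : ℝ → ℂ} (hk : 0 < |k|) (hδ : 0 < δ)
    (hδ₁ : δ ≤ 1) (hν : ν = |k| * δ ^ 3) (hs : |s| ≤ |k| * δ / 10000) (hw : ContDiff ℝ 2 w)
    (hw₀ : IsTestFunction w) (hM : 0 ≤ M)
    (hF : Dominates (orrSommerfeld ν k lam s w) M) :
    |k| * δ ^ 2 * nL2 w ≤ 2000 * M ∧ ν * nL2 (deriv w) ≤ 100 * M ∧
      ν * |k| * nL2 w ≤ 100 * M := by
  have hν₀ : 0 ≤ ν := by rw [hν]; positivity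
  have hW := nL2_nonneg w
  have hV := nL2_nonneg (deriv w)
  have hY := criticalNorm_nonneg δ lam w
  have interpolation := criticalNorm_sq_le lam hδ hw₀
  have layer := critical_layer_estimate hν₀ hδ hδ₁ hw hw₀ hM hF
  have energy := energy_estimate hw hw₀ hM hF
  rw [innI_self, Complex.norm_real, Real.norm_of_nonneg (sq_nonneg _), ← sq_abs k] at layer
  rw [← sq_abs k] at energy
  have hs' := (le_abs_self s).trans hs
  clear hF hw₀ hw
  generalize |k| = K at *
  generalize nL2 w = W at *
  generalize nL2 (deriv w) = V at *
  generalize criticalNorm δ lam w = Y at *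
  refine bounds_of_quadratic_estimates (Z := K * δ ^ 2 * Y) (by positivity) (by positivity) hM
    ?_ ?_ ?_
  · calc (K * δ ^ 2 * Y) ^ 2 = (K * δ ^ 2) ^ 2 * Y ^ 2 := by ring
      _ ≤ (K * δ ^ 2) ^ 2 * (Real.pi * δ * (W * V)) := by gcongr
      _ ≤ (K * δ ^ 2) ^ 2 * (4 * δ * (W * V)) := by gcongr; exact Real.pi_le_four
      _ = 4 * (K * δ ^ 2 * W * (ν * V)) := by rw [hν]; ring
  · calc (K * δ ^ 2 * W) ^ 2 = K * δ ^ 2 * (K * δ ^ 2 * W ^ 2) := by ring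
      _ ≤ K * δ ^ 2 * (M * (2 * Y + δ * V) + ν * V * (Y + δ * V) + δ * (ν * K ^ 2 * (W * W))
          + δ * ((K * δ + K * δ) * (W * Y))) := by
        refine mul_le_mul_of_nonneg_left (layer.trans ?_) (by positivity)
        gcongr
        linarith only [hs, mul_pos hk hδ]
      _ = _ := by rw [hν]; ring
  · calc (ν * V) ^ 2 + (ν * K * W) ^ 2 = ν * (ν * V ^ 2 + ν * K ^ 2 * W ^ 2) := by ring
      _ ≤ ν * (M * (W + V) + K * δ / 10000 * W ^ 2) := by
        refine mul_le_mul_of_nonneg_left (energy.trans ?_) hν₀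
        gcongr
      _ = M * (K * δ ^ 2 * δ * W + ν * V) + (K * δ ^ 2 * W) ^ 2 / 10000 := by rw [hν]; ring
      _ ≤ M * (K * δ ^ 2 * 1 * W + ν * V) + (K * δ ^ 2 * W) ^ 2 / 10000 := by gcongr
      _ = _ := by ring

/-! ### The velocity estimate -/

/-- The vorticity `φ'' - k² φ` of the stream function `φ` at wave number `k`. -/
noncomputable def vorticity (k : ℝ) (φ : ℝ → ℂ) : ℝ → ℂ := fun y =>
  deriv (deriv φ) y - (k : ℂ) ^ 2 * φ y

/-- The `L²` norm `(‖φ'‖² + k² ‖φ‖²)^{1/2}` of the velocity with stream function `φ`. -/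
noncomputable def velocityNorm (k : ℝ) (φ : ℝ → ℂ) : ℝ :=
  √(nL2 (deriv φ) ^ 2 + k ^ 2 * nL2 φ ^ 2)

section Velocity

variable {ν k lam s M δ : ℝ} {φ : ℝ → ℂ}

lemma contDiff_vorticity {n : ℕ} (hφ : ContDiff ℝ (n + 2) φ) :
    ContDiff ℝ n (vorticity k φ) := by
  have hφ₁ : ContDiff ℝ (n + 1) (deriv φ) := hφ.deriv'
  exact hφ₁.deriv'.sub (contDiff_const.mul (hφ.of_le le_self_add))

lemma isTestFunction_vorticity (hφ : ContDiff ℝ 3 φ) (hφ₀ : IsTestFunction φ)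
    (hφ''_left : deriv (deriv φ) (-1) = 0) (hφ''_right : deriv (deriv φ) 1 = 0) :
    IsTestFunction (vorticity k φ) where
  contDiff := contDiff_vorticity (n := 1) hφ
  left_eq_zero := by rw [vorticity, hφ''_left, hφ₀.left_eq_zero, mul_zero, sub_zero]
  right_eq_zero := by rw [vorticity, hφ''_right, hφ₀.right_eq_zero, mul_zero, sub_zero]

section

variable (k φ)

lemma velocityNorm_nonneg : 0 ≤ velocityNorm k φ := Real.sqrt_nonneg _

lemma velocityNorm_sq : velocityNorm k φ ^ 2 = nL2 (deriv φ) ^ 2 + k ^ 2 * nL2 φ ^ 2 :=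
  Real.sq_sqrt (by positivity)

lemma nL2_deriv_le_velocityNorm : nL2 (deriv φ) ≤ velocityNorm k φ :=
  Real.le_sqrt_of_sq_le (le_add_of_nonneg_right (by positivity))

lemma abs_mul_nL2_le_velocityNorm : |k| * nL2 φ ≤ velocityNorm k φ := by
  refine Real.le_sqrt_of_sq_le ?_
  rw [mul_pow, sq_abs]
  exact le_add_of_nonneg_left (sq_nonneg _)

end

lemma innI_vorticity_self (hφ : ContDiff ℝ 2 φ) (hφ₀ : IsTestFunction φ) :
    innI (vorticity k φ) φ = -((velocityNorm k φ ^ 2 : ℝ) : ℂ) := by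
  have hφ₁ : ContDiff ℝ 1 (deriv φ) := hφ.deriv' (n := 1)
  have hφ₂ : MemL2 (deriv (deriv φ)) := memL2_of_continuous hφ₁.continuous_deriv_one
  have hkφ : MemL2 fun y => -(k : ℂ) ^ 2 * φ y :=
    memL2_of_continuous (continuous_const.mul hφ.continuous)
  have expand : vorticity k φ = fun y => deriv (deriv φ) y + -(k : ℂ) ^ 2 * φ y := by
    ext y
    rw [vorticity]
    ring
  rw [expand, innI_add_left hφ₂ hkφ hφ₀.memL2, innI_const_mul_left, innI_deriv_left hφ₁ hφ₀,
    innI_self, innI_self, velocityNorm_sq]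
  push_cast
  ring

lemma abs_mul_velocityNorm_le (hφ : ContDiff ℝ 2 φ) (hφ₀ : IsTestFunction φ) :
    |k| * velocityNorm k φ ≤ nL2 (vorticity k φ) := by
  have hU₀ := velocityNorm_nonneg k φ
  have hw : MemL2 (vorticity k φ) := memL2_of_continuous (contDiff_vorticity (n := 0) hφ).continuous
  have cauchy_schwarz := norm_innI_le hw hφ₀.memL2
  rw [innI_vorticity_self hφ hφ₀, norm_neg, Complex.norm_real,
    Real.norm_of_nonneg (sq_nonneg _)] at cauchy_schwarz
  rcases hU₀.eq_or_lt with hU | hU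
  · rw [← hU, mul_zero]
    exact nL2_nonneg _
  refine le_of_mul_le_mul_right ?_ hU
  calc |k| * velocityNorm k φ * velocityNorm k φ = |k| * velocityNorm k φ ^ 2 := by ring
    _ ≤ |k| * (nL2 (vorticity k φ) * nL2 φ) := by gcongr
    _ = nL2 (vorticity k φ) * (|k| * nL2 φ) := by ring
    _ ≤ nL2 (vorticity k φ) * velocityNorm k φ :=
      mul_le_mul_of_nonneg_left (abs_mul_nL2_le_velocityNorm k φ) (nL2_nonneg _)

lemma sqrt_mul_criticalNorm_le (hδ : 0 < δ) (hφ₀ : IsTestFunction φ) :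
    √(|k| * δ) * criticalNorm δ lam φ ≤ 2 * δ * velocityNorm k φ := by
  have hU₀ := velocityNorm_nonneg k φ
  have hU : |k| * nL2 φ * nL2 (deriv φ) ≤ velocityNorm k φ * velocityNorm k φ :=
    mul_le_mul (abs_mul_nL2_le_velocityNorm k φ) (nL2_deriv_le_velocityNorm k φ) (nL2_nonneg _) hU₀
  have hPQ : 0 ≤ |k| * nL2 φ * nL2 (deriv φ) :=
    mul_nonneg (mul_nonneg (abs_nonneg k) (nL2_nonneg _)) (nL2_nonneg _)
  refine le_of_sq_le_sq ?_ (by positivity)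
  calc (√(|k| * δ) * criticalNorm δ lam φ) ^ 2 = |k| * δ * criticalNorm δ lam φ ^ 2 := by
        rw [mul_pow, Real.sq_sqrt (by positivity)]
    _ ≤ |k| * δ * (Real.pi * δ * (nL2 φ * nL2 (deriv φ))) := by
        gcongr
        exact criticalNorm_sq_le lam hδ hφ₀
    _ = Real.pi * δ ^ 2 * (|k| * nL2 φ * nL2 (deriv φ)) := by ring
    _ ≤ 4 * δ ^ 2 * (velocityNorm k φ * velocityNorm k φ) := by
        gcongr
        exact Real.pi_le_four
    _ = (2 * δ * velocityNorm k φ) ^ 2 := by ring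

lemma velocity_estimate_of_one_le (hkδ : 1 ≤ |k| * δ) (hφ : ContDiff ℝ 2 φ)
    (hφ₀ : IsTestFunction φ) :
    √(|k| * δ) ^ 3 * velocityNorm k φ ≤ |k| * δ ^ 2 * nL2 (vorticity k φ) := by
  have hU₀ := velocityNorm_nonneg k φ
  calc √(|k| * δ) ^ 3 * velocityNorm k φ ≤ √(|k| * δ) ^ 4 * velocityNorm k φ := by
        gcongr ?_ * _
        exact pow_le_pow_right₀ (Real.one_le_sqrt.2 hkδ) (by norm_num)
    _ = |k| * δ ^ 2 * (|k| * velocityNorm k φ) := by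
        rw [show √(|k| * δ) ^ 4 = (√(|k| * δ) ^ 2) ^ 2 by ring,
          Real.sq_sqrt (zero_le_one.trans hkδ)]
        ring
    _ ≤ |k| * δ ^ 2 * nL2 (vorticity k φ) := by
        gcongr
        exact abs_mul_velocityNorm_le hφ hφ₀

lemma velocity_layer_estimate (hν : 0 ≤ ν) (hδ : 0 < δ) (hδ₁ : δ ≤ 1)
    (hs : |s| ≤ |k| * δ) (hφ : ContDiff ℝ 4 φ) (hφ₀ : IsTestFunction φ) (hM : 0 ≤ M)
    (hF : Dominates (orrSommerfeld ν k lam s (vorticity k φ)) M)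
    (hw : |k| * δ ^ 2 * nL2 (vorticity k φ) ≤ 2000 * M)
    (hw_deriv : ν * nL2 (deriv (vorticity k φ)) ≤ 100 * M)
    (hw_viscous : ν * |k| * nL2 (vorticity k φ) ≤ 100 * M) :
    |k| * δ ^ 2 * velocityNorm k φ ^ 2
      ≤ 4102 * M * criticalNorm δ lam φ + 201 * M * δ * velocityNorm k φ := by
  have layer := critical_layer_estimate hν hδ hδ₁ (contDiff_vorticity (n := 2) hφ) hφ₀ hM hF
  rw [innI_vorticity_self (hφ.of_le (by norm_num)) hφ₀, norm_neg, Complex.norm_real,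
    Real.norm_of_nonneg (sq_nonneg _), ← sq_abs k] at layer
  have hU₀ := velocityNorm_nonneg k φ
  have hP := abs_mul_nL2_le_velocityNorm k φ
  have hQ := nL2_deriv_le_velocityNorm k φ
  have hQ₀ := nL2_nonneg (deriv φ)
  have hP₀ := nL2_nonneg φ
  have hW₀ := nL2_nonneg (vorticity k φ)
  have hX₀ := criticalNorm_nonneg δ lam φ
  have hK₀ := abs_nonneg k
  generalize |k| = K at *
  generalize nL2 (vorticity k φ) = W at *
  generalize nL2 (deriv (vorticity k φ)) = V at *
  generalize criticalNorm δ lam φ = X at *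
  generalize velocityNorm k φ = U at *
  calc K * δ ^ 2 * U ^ 2
      ≤ M * (2 * X + δ * nL2 (deriv φ)) + ν * V * (X + δ * nL2 (deriv φ))
        + δ * (ν * K * W * (K * nL2 φ)) + δ * ((|s| + K * δ) * (W * X)) := by
        linarith only [layer]
    _ ≤ M * (2 * X + δ * U) + 100 * M * (X + δ * U) + δ * (100 * M * U)
        + δ * ((K * δ + K * δ) * (W * X)) := by gcongr
    _ = M * (2 * X + δ * U) + 100 * M * (X + δ * U) + δ * (100 * M * U)
        + 2 * (K * δ ^ 2 * W) * X := by ring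
    _ ≤ M * (2 * X + δ * U) + 100 * M * (X + δ * U) + δ * (100 * M * U)
        + 2 * (2000 * M) * X := by gcongr
    _ = _ := by ring

lemma velocity_estimate_of_layer_estimate (hδ : 0 < δ) (hkδ : |k| * δ ≤ 1)
    (hφ₀ : IsTestFunction φ) (hM : 0 ≤ M)
    (layer : |k| * δ ^ 2 * velocityNorm k φ ^ 2
      ≤ 4102 * M * criticalNorm δ lam φ + 201 * M * δ * velocityNorm k φ) :
    √(|k| * δ) ^ 3 * velocityNorm k φ ≤ 10000 * M := by
  have interpolation := sqrt_mul_criticalNorm_le (k := k) (lam := lam) hδ hφ₀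
  have hr₀ := Real.sqrt_nonneg (|k| * δ)
  have hr_sq : √(|k| * δ) ^ 2 = |k| * δ := Real.sq_sqrt (by positivity)
  have hr_le := Real.sqrt_le_one.2 hkδ
  have hU₀ := velocityNorm_nonneg k φ
  generalize √(|k| * δ) = r at *
  generalize criticalNorm δ lam φ = X at *
  generalize velocityNorm k φ = U at *
  rcases hU₀.eq_or_lt with rfl | hU
  · simpa only [mul_zero] using mul_nonneg (by norm_num) hM
  refine le_of_mul_le_mul_right ?_ (mul_pos hδ hU)
  calc r ^ 3 * U * (δ * U) = r * (|k| * δ ^ 2 * U ^ 2) := by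
        linear_combination r * δ * U ^ 2 * hr_sq
    _ ≤ r * (4102 * M * X + 201 * M * δ * U) := by gcongr
    _ = 4102 * M * (r * X) + 201 * M * δ * U * r := by ring
    _ ≤ 4102 * M * (2 * δ * U) + 201 * M * δ * U * 1 := by gcongr
    _ = 8405 * M * (δ * U) := by ring
    _ ≤ 10000 * M * (δ * U) := by
        gcongr
        norm_num

lemma resolvent_estimate (hk : 0 < |k|) (hδ : 0 < δ) (hδ₁ : δ ≤ 1) (hν : ν = |k| * δ ^ 3)
    (hs : |s| ≤ |k| * δ / 10000) (hφ : ContDiff ℝ 4 φ) (hφ₀ : IsTestFunction φ)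
    (hw₀ : IsTestFunction (vorticity k φ)) (hM : 0 ≤ M)
    (hF : Dominates (orrSommerfeld ν k lam s (vorticity k φ)) M) :
    √(|k| * δ) ^ 3 * velocityNorm k φ + ν * nL2 (deriv (vorticity k φ))
      + |k| * δ ^ 2 * nL2 (vorticity k φ) ≤ 12100 * M := by
  obtain ⟨hw, hw_deriv, hw_viscous⟩ :=
    vorticity_estimate hk hδ hδ₁ hν hs (contDiff_vorticity (n := 2) hφ) hw₀ hM hF
  have hν₀ : 0 ≤ ν := by rw [hν]; positivity
  have hs' : |s| ≤ |k| * δ := hs.trans (div_le_self (by positivity) (by norm_num))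
  have hu : √(|k| * δ) ^ 3 * velocityNorm k φ ≤ 10000 * M := by
    rcases le_total 1 (|k| * δ) with hkδ | hkδ
    · have := velocity_estimate_of_one_le hkδ (hφ.of_le (by norm_num)) hφ₀
      linarith only [this, hw, hM]
    · exact velocity_estimate_of_layer_estimate hδ hkδ hφ₀ hM
        (velocity_layer_estimate hν₀ hδ hδ₁ hs' hφ hφ₀ hM hF hw hw_deriv hw_viscous)
  linarith only [hu, hw_deriv, hw]

end Velocity

/-! ### The scale of the critical layer -/

/-- The width `δ = (ν / |k|)^{1/3}` of the critical layer, at which the viscous term `ν / δ²` and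
the transport term `|k| δ` balance. -/
noncomputable def layerWidth (ν k : ℝ) : ℝ := (ν / |k|) ^ ((1 : ℝ) / 3)

section LayerWidth

variable {ν k : ℝ}

lemma layerWidth_pos (hν : 0 < ν) (hk : 0 < |k|) : 0 < layerWidth ν k :=
  Real.rpow_pos_of_pos (div_pos hν hk) _

lemma layerWidth_le_one (hν : 0 ≤ ν) (hνk : ν ≤ |k|) : layerWidth ν k ≤ 1 :=
  Real.rpow_le_one (by positivity) (div_le_one_of_le₀ hνk (abs_nonneg k)) (by norm_num)

lemma abs_mul_layerWidth_pow_three (hν : 0 ≤ ν) (hk : 0 < |k|) :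
    |k| * layerWidth ν k ^ 3 = ν := by
  have hcube : layerWidth ν k ^ 3 = ν / |k| := by
    rw [layerWidth, ← Real.rpow_natCast, ← Real.rpow_mul (by positivity)]
    norm_num
  rw [hcube, mul_div_cancel₀ ν hk.ne']

lemma rpow_mul_rpow_eq_abs_mul_layerWidth (hν : 0 ≤ ν) (hk : 0 < |k|) :
    ν ^ ((1 : ℝ) / 3) * |k| ^ ((2 : ℝ) / 3) = |k| * layerWidth ν k := by
  rw [layerWidth, Real.div_rpow hν hk.le, mul_div_left_comm, ← Real.rpow_one_sub' hk.le]
  all_goals norm_num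

lemma rpow_mul_rpow_eq_abs_mul_layerWidth_sq (hν : 0 ≤ ν) (hk : 0 < |k|) :
    ν ^ ((2 : ℝ) / 3) * |k| ^ ((1 : ℝ) / 3) = |k| * layerWidth ν k ^ 2 := by
  have hsq : layerWidth ν k ^ 2 = (ν / |k|) ^ ((2 : ℝ) / 3) := by
    rw [layerWidth, ← Real.rpow_mul_natCast (by positivity)]
    norm_num
  rw [hsq, Real.div_rpow hν hk.le, mul_div_left_comm, ← Real.rpow_one_sub' hk.le]
  all_goals norm_num

lemma rpow_half_eq_sqrt_pow_three (hν : 0 ≤ ν) (hk : 0 < |k|) :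
    (ν * k ^ 2) ^ ((1 : ℝ) / 2) = √(|k| * layerWidth ν k) ^ 3 := by
  have hδ : 0 ≤ layerWidth ν k := Real.rpow_nonneg (by positivity) _
  have hcube : ν * k ^ 2 = (√(|k| * layerWidth ν k) ^ 3) ^ 2 := by
    rw [pow_right_comm, Real.sq_sqrt (by positivity), ← sq_abs k]
    linear_combination -|k| ^ 2 * abs_mul_layerWidth_pow_three hν hk
  rw [← Real.sqrt_eq_rpow, hcube, Real.sqrt_sq (by positivity)]

end LayerWidth

/-! ### The resolvent estimate -/

theorem statement2_general {ν k ε lam M : ℝ} {φ : ℝ → ℂ} (hν : 0 < ν) (hνk : ν ≤ |k|)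
    (hε : |ε| ≤ 1 / 10000) (hφ : ContDiff ℝ 4 φ) (hφ_left : φ (-1) = 0) (hφ_right : φ 1 = 0)
    (hφ''_left : deriv (deriv φ) (-1) = 0) (hφ''_right : deriv (deriv φ) 1 = 0) (hM : 0 ≤ M)
    (hF : Dominates (orrSommerfeld ν k lam (ε * ν ^ ((1 : ℝ) / 3) * |k| ^ ((2 : ℝ) / 3))
      (vorticity k φ)) M) :
    (ν * k ^ 2) ^ ((1 : ℝ) / 2) * (nL2 (deriv φ) ^ 2 + k ^ 2 * nL2 φ ^ 2) ^ ((1 : ℝ) / 2)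
      + ν * nL2 (deriv (vorticity k φ))
      + ν ^ ((2 : ℝ) / 3) * |k| ^ ((1 : ℝ) / 3) * nL2 (vorticity k φ) ≤ 12100 * M := by
  have hk := hν.trans_le hνk
  have hφ₀ : IsTestFunction φ := ⟨hφ.of_le (by norm_num), hφ_left, hφ_right⟩
  have hw₀ : IsTestFunction (vorticity k φ) :=
    isTestFunction_vorticity (hφ.of_le (by norm_num)) hφ₀ hφ''_left hφ''_right
  have hs : |ε * (|k| * layerWidth ν k)| ≤ |k| * layerWidth ν k / 10000 := by
    rw [abs_mul, abs_of_pos (mul_pos hk (layerWidth_pos hν hk))]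
    linarith only [mul_le_mul_of_nonneg_right hε (mul_pos hk (layerWidth_pos hν hk)).le]
  rw [mul_assoc, rpow_mul_rpow_eq_abs_mul_layerWidth hν.le hk] at hF
  rw [rpow_half_eq_sqrt_pow_three hν.le hk, rpow_mul_rpow_eq_abs_mul_layerWidth_sq hν.le hk,
    ← Real.sqrt_eq_rpow]
  exact resolvent_estimate hk (layerWidth_pos hν hk) (layerWidth_le_one hν.le hνk)
    (abs_mul_layerWidth_pow_three hν.le hk).symm hs hφ hφ₀ hw₀ hM hF

/-- The `H^{-1} → H^{1}` resolvent estimate with Navier-slip boundary conditions for the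
shifted Orr–Sommerfeld operator. -/
theorem statement2 :
    ∃ ε₀ C : ℝ, 0 < ε₀ ∧ ε₀ < 1 ∧ 0 < C ∧
      ∀ (ν : ℝ) (k : ℤ) (ε lam : ℝ) (φ w F : ℝ → ℂ) (M : ℝ),
        0 < ν → ν ≤ 1 → 1 ≤ |k| → 0 < ε → ε ≤ ε₀ →
        ContDiff ℝ 4 φ →
        φ (-1) = 0 → φ 1 = 0 →
        deriv (deriv φ) (-1) = 0 → deriv (deriv φ) 1 = 0 →
        (w = fun y : ℝ => deriv (deriv φ) y - (k:ℂ)^2 * φ y) →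
        (F = fun y : ℝ => -(ν : ℂ) * (deriv (deriv w) y - (k:ℂ)^2 * w y)
            + Complex.I * (k:ℂ) * ((y:ℂ) - (lam:ℂ)) * w y
            - ((ε * ν ^ ((1:ℝ)/3) * |(k:ℝ)| ^ ((2:ℝ)/3) : ℝ) : ℂ) * w y) →
        0 ≤ M → Dominates F M →
        (ν * (k:ℝ)^2) ^ ((1:ℝ)/2) *
            ((nL2 (deriv φ) ^ 2 + (k:ℝ)^2 * nL2 φ ^ 2) ^ ((1:ℝ)/2))
          + ν * nL2 (deriv w)
          + ν ^ ((2:ℝ)/3) * |(k:ℝ)| ^ ((1:ℝ)/3) * nL2 w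
          ≤ C * M := by
  refine ⟨1 / 10000, 12100, by norm_num, by norm_num, by norm_num, ?_⟩
  rintro ν k ε lam φ _ _ M hν hν₁ hk hε₀ hε hφ hφ_left hφ_right hφ''_left hφ''_right rfl rfl hM hF
  have hνk : ν ≤ |(k : ℝ)| := hν₁.trans (mod_cast hk)
  exact statement2_general hν hνk ((abs_of_pos hε₀).trans_le hε) hφ hφ_left hφ_right hφ''_left
    hφ''_right hM hF
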